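/- Let S be a set of q − 1 + a points in PG(2,q) with a ≥ 3, and suppose ℓ₁ and ℓ₂ are a-secants of S such that there is a unique tangent to S at each point of S ∩ ℓ_i for i = 1, 2; let N₁, N₂ be the nuclei of ℓ₁, ℓ₂. Then: (1) either N₁ ∈ ℓ₂ and N₂ ∈ ℓ₁, or (2) N₁ = N₂, p divides a, and for every R ∈ S contained in a unique tangent r to S, the tangent r passes through the common nucleus N₁ = N₂. (3) If ℓ₃ is a further a-secant of S such that there is a unique tangent to S at each point of S ∩ ℓ₃, and q or a is odd, then ℓ₃ is the line N₁N₂ (so ℓ₃ is uniquely determined). -/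

import Mathlib

/-! Common setup: the Desarguesian projective plane `PG(2,q)` over a finite field `F = GF(q)`.
Points are the projective points of `F³`; lines are the 2-dimensional linear subspaces of `F³`,
with incidence given by containment. -/

/-- Points of `PG(2,F)`. -/
abbrev PGPoint (F : Type*) [Field F] := Projectivization F (Fin 3 → F)

/-- Lines of `PG(2,F)`: the 2-dimensional linear subspaces of `F³`. -/
abbrev PGLine (F : Type*) [Field F] := {W : Submodule F (Fin 3 → F) // Module.finrank F W = 2}

/-- Incidence between a point and a line of `PG(2,F)`. -/
def pgMem {F : Type*} [Field F] (P : PGPoint F) (L : PGLine F) : Prop :=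
  P.submodule ≤ L.val

/-- The number of points of the point set `B` lying on the line `L`;
`L` is a *`k`-secant* of `B` if `nsec B L = k`, a *tangent* if `k = 1`,
a *bisecant* if `k = 2` and a *trisecant* if `k = 3`. -/
noncomputable def nsec {F : Type*} [Field F] (B : Set (PGPoint F)) (L : PGLine F) : ℕ :=
  {P ∈ B | pgMem P L}.ncard

/-- A blocking set: a point set meeting every line. -/
def isBlocking {F : Type*} [Field F] (B : Set (PGPoint F)) : Prop :=
  ∀ L : PGLine F, ∃ P ∈ B, pgMem P L

/-- A minimal blocking set: every point is essential. -/
def isMinimalBlocking {F : Type*} [Field F] (B : Set (PGPoint F)) : Prop :=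
  isBlocking B ∧ ∀ P ∈ B, ¬ isBlocking (B \ {P})

/-- `B` is a blocking set of Rédei type with Rédei line `ℓ`: a blocking set of size
`q + N ≤ 2q` such that `ℓ` meets `B` in exactly `N = |B| − q` points. -/
def isRedeiWithLine {F : Type*} [Field F] (q : ℕ) (B : Set (PGPoint F)) (ℓ : PGLine F) : Prop :=
  isBlocking B ∧ B.ncard ≤ 2 * q ∧ nsec B ℓ + q = B.ncard

/-- A semioval: through each of its points there passes exactly one tangent. -/
def isSemioval {F : Type*} [Field F] (S : Set (PGPoint F)) : Prop :=
  ∀ P ∈ S, ∃! t : PGLine F, pgMem P t ∧ nsec S t = 1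

section ProjectivePlane

variable {F : Type*} [Field F]

/-- Linear forms on `F³`; the nonzero ones are equations of lines of `PG(2,F)`. -/
abbrev PGForm (F : Type*) [Field F] := Module.Dual F (Fin 3 → F)

lemma pgPoint_eq_of_smul_rep_eq {P Q : PGPoint F} {c d : F} (hc : c ≠ 0)
    (h : c • P.rep = d • Q.rep) : P = Q := by
  rw [← P.mk_rep, ← Q.mk_rep, Projectivization.mk_eq_mk_iff']
  exact ⟨c⁻¹ * d, by rw [mul_smul, ← h, smul_smul, inv_mul_cancel₀ hc, one_smul]⟩

lemma finrank_ker_pgForm {f : PGForm F} (hf : f ≠ 0) :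
    Module.finrank F (LinearMap.ker f) = 2 := by
  have := Module.Dual.finrank_ker_add_one_of_ne_zero hf
  simp at this
  omega

lemma pgMem_iff_rep_mem (P : PGPoint F) (L : PGLine F) : pgMem P L ↔ P.rep ∈ L.val := by
  rw [pgMem, Projectivization.submodule_eq, Submodule.span_singleton_le_iff_mem]

lemma exists_pgForm_ker_eq (L : PGLine F) :
    ∃ f : PGForm F, f ≠ 0 ∧ LinearMap.ker f = L.val := by
  have hlt : L.val < ⊤ := by
    refine lt_top_iff_ne_top.2 fun h => ?_
    have := L.2
    rw [h, finrank_top] at this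
    simp at this
  obtain ⟨f, hf, hle⟩ := Submodule.exists_le_ker_of_lt_top _ hlt
  exact ⟨f, hf, (Submodule.eq_of_le_of_finrank_eq hle
    (by rw [L.2, finrank_ker_pgForm hf])).symm⟩

lemma finrank_span_rep_pair {P Q : PGPoint F} (h : P ≠ Q) :
    Module.finrank F (Submodule.span F (Set.range ![P.rep, Q.rep])) = 2 := by
  have hli : LinearIndependent F ![P.rep, Q.rep] := by
    have := (Projectivization.independent_pair_iff_ne P Q).2 h
    rw [Projectivization.independent_iff] at this
    have heq : ![P.rep, Q.rep] = Projectivization.rep ∘ ![P, Q] := by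
      funext i
      fin_cases i <;> rfl
    rw [heq]
    exact this
  simpa using finrank_span_eq_card hli

lemma span_rep_pair_le_ker {P Q : PGPoint F} {f : PGForm F} (hP : f P.rep = 0)
    (hQ : f Q.rep = 0) : Submodule.span F (Set.range ![P.rep, Q.rep]) ≤ LinearMap.ker f := by
  rw [Submodule.span_le]
  rintro _ ⟨i, rfl⟩
  fin_cases i <;> simpa

lemma exists_pgForm_through (P Q : PGPoint F) :
    ∃ f : PGForm F, f ≠ 0 ∧ f P.rep = 0 ∧ f Q.rep = 0 := by
  have hlt : Submodule.span F (Set.range ![P.rep, Q.rep]) < ⊤ := by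
    refine lt_top_iff_ne_top.2 fun h => ?_
    have := finrank_range_le_card (R := F) ![P.rep, Q.rep]
    rw [Set.finrank, h, finrank_top] at this
    simp at this
  obtain ⟨f, hf, hle⟩ := Submodule.exists_le_ker_of_lt_top _ hlt
  exact ⟨f, hf, hle (Submodule.subset_span ⟨0, rfl⟩), hle (Submodule.subset_span ⟨1, rfl⟩)⟩

lemma ker_eq_span_rep_pair {P Q : PGPoint F} (h : P ≠ Q) {f : PGForm F} (hf : f ≠ 0)
    (hP : f P.rep = 0) (hQ : f Q.rep = 0) :
    Submodule.span F (Set.range ![P.rep, Q.rep]) = LinearMap.ker f :=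
  Submodule.eq_of_le_of_finrank_eq (span_rep_pair_le_ker hP hQ)
    (by rw [finrank_span_rep_pair h, finrank_ker_pgForm hf])

/-- Two points determine the equation of their line up to a scalar. -/
lemma pgForm_eq_smul {P Q : PGPoint F} (h : P ≠ Q) {f g : PGForm F} (hf : f ≠ 0)
    (hfP : f P.rep = 0) (hfQ : f Q.rep = 0) (hgP : g P.rep = 0) (hgQ : g Q.rep = 0) :
    ∃ c : F, g = c • f := by
  obtain ⟨v, hv⟩ : ∃ v, f v ≠ 0 := by
    by_contra! hcon
    exact hf (LinearMap.ext hcon)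
  refine ⟨g v / f v, ?_⟩
  rw [← sub_eq_zero]
  by_contra hne
  have h1 := ker_eq_span_rep_pair h hf hfP hfQ
  have h2 := ker_eq_span_rep_pair h hne (by simp [hfP, hgP]) (by simp [hfQ, hgQ])
  have : v ∈ LinearMap.ker (g - (g v / f v) • f) := by simp [hv]
  rw [← h2, h1] at this
  exact hv this

/-- The common zeros of two independent forms are the multiples of a single vector. -/
lemma eq_smul_rep_of_forms_eq_zero {P : PGPoint F} {f g : PGForm F} (hf : f ≠ 0)
    (hg : ∀ c : F, g ≠ c • f) (hfP : f P.rep = 0) (hgP : g P.rep = 0) {v : Fin 3 → F}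
    (hfv : f v = 0) (hgv : g v = 0) : ∃ c : F, v = c • P.rep := by
  by_cases hv : v = 0
  · exact ⟨0, by simp [hv]⟩
  obtain ⟨c, hc⟩ := Projectivization.exists_smul_eq_mk_rep F v hv
  have hPv : P = Projectivization.mk F v hv := by
    by_contra hne
    obtain ⟨d, hd⟩ := pgForm_eq_smul hne hf hfP
      (by rw [← hc, Units.smul_def, map_smul, hfv, smul_zero]) hgP
      (by rw [← hc, Units.smul_def, map_smul, hgv, smul_zero])
    exact hg d hd
  refine ⟨(c⁻¹ : Fˣ), ?_⟩
  rw [hPv, ← hc, ← Units.smul_def, inv_smul_smul]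

lemma pgLine_eq_of_mem {P Q : PGPoint F} (h : P ≠ Q) {L M : PGLine F} (hPL : pgMem P L)
    (hQL : pgMem Q L) (hPM : pgMem P M) (hQM : pgMem Q M) : L = M := by
  obtain ⟨f, hf, hfL⟩ := exists_pgForm_ker_eq L
  obtain ⟨g, hg, hgM⟩ := exists_pgForm_ker_eq M
  rw [pgMem_iff_rep_mem, ← hfL, LinearMap.mem_ker] at hPL hQL
  rw [pgMem_iff_rep_mem, ← hgM, LinearMap.mem_ker] at hPM hQM
  apply Subtype.ext
  rw [← hfL, ← hgM, ← ker_eq_span_rep_pair h hf hPL hQL, ker_eq_span_rep_pair h hg hPM hQM]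

open Classical in
/-- The points of `S` off the line with equation `f`. -/
noncomputable def offLine (S : Finset (PGPoint F)) (f : PGForm F) : Finset (PGPoint F) :=
  S.filter fun P => f P.rep ≠ 0

open Classical in
/-- The points of `S` on the line with equation `f`. -/
noncomputable def onLine (S : Finset (PGPoint F)) (f : PGForm F) : Finset (PGPoint F) :=
  S.filter fun P => f P.rep = 0

@[simp] lemma mem_offLine {S : Finset (PGPoint F)} {f : PGForm F} {P : PGPoint F} :
    P ∈ offLine S f ↔ P ∈ S ∧ f P.rep ≠ 0 := by
  simp [offLine]

@[simp] lemma mem_onLine {S : Finset (PGPoint F)} {f : PGForm F} {P : PGPoint F} :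
    P ∈ onLine S f ↔ P ∈ S ∧ f P.rep = 0 := by
  simp [onLine]

lemma pgForm_ne_smul {f g : PGForm F} (hg : g ≠ 0) {Q : PGPoint F} (hgQ : g Q.rep = 0)
    (hfQ : f Q.rep ≠ 0) (c : F) : g ≠ c • f := by
  rintro rfl
  have : c = 0 := by simpa [hfQ] using hgQ
  exact hg (by simp [this])

lemma nsec_eq_card_onLine (T : Finset (PGPoint F)) {L : PGLine F} {f : PGForm F}
    (hf : LinearMap.ker f = L.val) : nsec (T : Set (PGPoint F)) L = (onLine T f).card := by
  rw [nsec, ← Set.ncard_coe_finset]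
  congr 1
  ext P
  simp [pgMem_iff_rep_mem, ← hf]

lemma pgMem_iff_form_eq_zero {L : PGLine F} {f : PGForm F} (hf : LinearMap.ker f = L.val)
    (P : PGPoint F) : pgMem P L ↔ f P.rep = 0 := by
  rw [pgMem_iff_rep_mem, ← hf, LinearMap.mem_ker]

lemma card_onLine_add_card_offLine (T : Finset (PGPoint F)) (f : PGForm F) :
    (onLine T f).card + (offLine T f).card = T.card := by
  classical
  exact Finset.card_filter_add_card_filter_not _

lemma pgForm_ne_smul_of_pgLine_ne {L M : PGLine F} (h : L ≠ M) {f g : PGForm F} (hg : g ≠ 0)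
    (hf : LinearMap.ker f = L.val) (hgM : LinearMap.ker g = M.val) (c : F) : g ≠ c • f := by
  rintro rfl
  have hc : c ≠ 0 := fun e => hg (by simp [e])
  apply h
  apply Subtype.ext
  rw [← hf, ← hgM, LinearMap.ker_smul _ _ hc]

lemma eq_of_mem_tangent {T : Finset (PGPoint F)} {L : PGLine F}
    (hL : nsec (T : Set (PGPoint F)) L = 1) {P Q : PGPoint F} (hP : P ∈ T) (hQ : Q ∈ T)
    (hPL : pgMem P L) (hQL : pgMem Q L) : P = Q := by
  obtain ⟨f, -, hf⟩ := exists_pgForm_ker_eq L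
  rw [nsec_eq_card_onLine T hf] at hL
  rw [pgMem_iff_form_eq_zero hf] at hPL hQL
  exact Finset.card_le_one.1 hL.le P (by simp [hP, hPL]) Q (by simp [hQ, hQL])

/-- A line through a point of `T` is a tangent or meets `T` in a further point. -/
lemma tangent_or_exists_mem {T : Finset (PGPoint F)} {P : PGPoint F} (hP : P ∈ T)
    {g : PGForm F} (hg : g ≠ 0) (hgP : g P.rep = 0) :
    (∃ M : PGLine F, LinearMap.ker g = M.val ∧ pgMem P M ∧ nsec (T : Set (PGPoint F)) M = 1) ∨
      ∃ Q ∈ T, Q ≠ P ∧ g Q.rep = 0 := by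
  by_cases hone : (onLine T g).card = 1
  · refine Or.inl ⟨⟨LinearMap.ker g, finrank_ker_pgForm hg⟩, rfl, ?_, ?_⟩
    · exact (pgMem_iff_form_eq_zero rfl P).2 hgP
    · rw [nsec_eq_card_onLine T rfl, hone]
  · right
    have hmem : P ∈ onLine T g := by simp [hP, hgP]
    have hpos := Finset.card_pos.2 ⟨P, hmem⟩
    obtain ⟨Q, hQ, hQP⟩ := Finset.exists_mem_ne (show 1 < (onLine T g).card by omega) P
    exact ⟨Q, (mem_onLine.1 hQ).1, hQP, (mem_onLine.1 hQ).2⟩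

end ProjectivePlane

section Nucleus

variable {F : Type*} [Field F] [Fintype F]

open Classical in
/-- Projecting from a point `P` of `S` on the line `f = 0`, the points of `S` off that line
correspond bijectively to the lines through `P` other than `f = 0` and the line joining `P`
to the point with coordinate vector `n`. -/
def ProjectsOff (S : Finset (PGPoint F)) (f : PGForm F) (n : Fin 3 → F) (P : PGPoint F) : Prop :=
  ∀ g : PGForm F, g P.rep = 0 → (∀ c : F, g ≠ c • f) →
    Set.InjOn (fun u : PGPoint F => g u.rep / f u.rep) (offLine S f) ∧
    (offLine S f).image (fun u => g u.rep / f u.rep) = Finset.univ.erase (g n / f n)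

/-- The vector `n` represents the nucleus of the secant `f = 0` of `S`. -/
structure IsNucleus (S : Finset (PGPoint F)) (f : PGForm F) (n : Fin 3 → F) : Prop where
  ne_zero : f ≠ 0
  off : f n ≠ 0
  projects : ∀ P ∈ S, f P.rep = 0 → ProjectsOff S f n P

lemma projectsOff_of_unique_tangent {S : Finset (PGPoint F)} {f : PGForm F}
    (hcard : (offLine S f).card + 1 = Fintype.card F) {P : PGPoint F}
    (hfP : f P.rep = 0) (hf : f ≠ 0) {n : Fin 3 → F} (hn : f n ≠ 0)
    (htan : ∀ g : PGForm F, g ≠ 0 → g P.rep = 0 → g n ≠ 0 → ∃ Q ∈ S, Q ≠ P ∧ g Q.rep = 0) :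
    ProjectsOff S f n P := by
  classical
  intro g hgP hg
  have hsub : Finset.univ.erase (g n / f n) ⊆
      (offLine S f).image (fun u => g u.rep / f u.rep) := by
    intro x hx
    have hx := Finset.ne_of_mem_erase hx
    obtain ⟨Q, hQS, hQP, hQ⟩ := htan (g - x • f)
      (fun h => hg x (sub_eq_zero.1 h)) (by simp [hgP, hfP])
      (fun h => hx (by
        rw [eq_div_iff hn]
        exact (sub_eq_zero.1 h).symm))
    have hgQ : g Q.rep = x * f Q.rep := by simpa [sub_eq_zero] using hQ
    have hfQ : f Q.rep ≠ 0 := by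
      intro h
      obtain ⟨c, hc⟩ := pgForm_eq_smul hQP.symm hf hfP h hgP (by rw [hgQ, h, mul_zero])
      exact hg c hc
    exact Finset.mem_image.2 ⟨Q, by simp [hQS, hfQ], by simp only [hgQ]; field_simp⟩
  have hle : (offLine S f).card ≤ (Finset.univ.erase (g n / f n)).card := by
    rw [Finset.card_erase_of_mem (Finset.mem_univ _), Finset.card_univ]
    omega
  have heq := Finset.eq_of_subset_of_card_le hsub (Finset.card_image_le.trans hle)
  refine ⟨Finset.card_image_iff.1 (le_antisymm Finset.card_image_le ?_), heq.symm⟩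
  rw [← heq]
  exact hle

open Classical in
lemma prod_univ_erase_zero : ∏ x ∈ (Finset.univ : Finset F).erase 0, x = -1 := by
  have h := congrArg (Units.coeHom F) (FiniteField.prod_univ_units_id_eq_neg_one (K := F))
  rw [map_prod] at h
  simp only [Units.coeHom_apply, Units.val_neg, Units.val_one] at h
  rw [← h]
  symm
  refine Finset.prod_bij (fun u _ => (u : F)) (by simp) (fun _ _ _ _ h => Units.ext h) ?_ (by simp)
  intro b hb
  exact ⟨Units.mk0 b (Finset.ne_of_mem_erase hb), by simp, by simp⟩

open Classical in
/-- The product formula underlying the lemma of tangents. -/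
lemma IsNucleus.prod_eq {S : Finset (PGPoint F)} {f : PGForm F} {n : Fin 3 → F}
    (h : IsNucleus S f n) {P Q : PGPoint F} (hP : P ∈ S) (hfP : f P.rep = 0) (hQ : Q ∈ S)
    (hfQ : f Q.rep ≠ 0) {g : PGForm F} (hg : g ≠ 0) (hgP : g P.rep = 0) (hgQ : g Q.rep = 0) :
    (∀ u ∈ S, f u.rep ≠ 0 → u ≠ Q → g u.rep ≠ 0) ∧ g n ≠ 0 ∧
      (∏ u ∈ (offLine S f).erase Q, g u.rep / f u.rep) * (g n / f n) = -1 := by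
  obtain ⟨hinj, himg⟩ := h.projects P hP hfP g hgP (pgForm_ne_smul hg hgQ hfQ)
  have hQU : Q ∈ offLine S f := by simp [hQ, hfQ]
  have hne : ∀ u ∈ S, f u.rep ≠ 0 → u ≠ Q → g u.rep ≠ 0 := by
    intro u hu hfu huQ hgu
    exact huQ (hinj (by simp [hu, hfu]) (by simp [hQ, hfQ]) (by simp [hgu, hgQ]))
  have h0 : (0 : F) ∈ Finset.univ.erase (g n / f n) := by
    rw [← himg]
    exact Finset.mem_image.2 ⟨Q, hQU, by simp [hgQ]⟩
  have hn0 : g n / f n ≠ 0 := (Finset.ne_of_mem_erase h0).symm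
  refine ⟨hne, fun h => hn0 (by simp [h]), ?_⟩
  have key : ((offLine S f).erase Q).image (fun u => g u.rep / f u.rep) =
      (Finset.univ.erase 0).erase (g n / f n) := by
    rw [Finset.erase_right_comm, ← himg]
    ext x
    simp only [Finset.mem_image, Finset.mem_erase, mem_offLine]
    constructor
    · rintro ⟨u, ⟨huQ, hu, hfu⟩, rfl⟩
      exact ⟨div_ne_zero (hne u hu hfu huQ) hfu, u, ⟨hu, hfu⟩, rfl⟩
    · rintro ⟨hx, u, hu, rfl⟩
      refine ⟨u, ⟨?_, hu⟩, rfl⟩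
      rintro rfl
      exact hx (by simp [hgQ])
  rw [← Finset.prod_image (s := (offLine S f).erase Q) (g := fun u => g u.rep / f u.rep)
    (f := fun x => x) (hinj.mono (by
      rw [Finset.coe_erase]
      exact Set.sdiff_subset)), key,
    Finset.prod_erase_mul _ _ (by simpa using hn0), prod_univ_erase_zero]

lemma IsNucleus.of_nucleus_of_point {S : Finset (PGPoint F)} {f : PGForm F}
    (hF : 2 < Fintype.card F) (hcard : (offLine S f).card + 1 = Fintype.card F) (hf : f ≠ 0)
    (h : ∀ P ∈ S, f P.rep = 0 → ∃ n : Fin 3 → F, f n ≠ 0 ∧ ProjectsOff S f n P) :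
    ∃ n, IsNucleus S f n := by
  classical
  set v : Fin 3 → F := -∑ u ∈ offLine S f, (f u.rep)⁻¹ • u.rep with hv
  have hfv : f v = 1 := by
    have h1 : ∑ u ∈ offLine S f, (f u.rep)⁻¹ * f u.rep = ((offLine S f).card : F) := by
      rw [Finset.sum_congr rfl (g := fun _ => (1 : F))
        (fun u hu => inv_mul_cancel₀ (mem_offLine.1 hu).2)]
      simp
    have h2 : ((offLine S f).card : F) + 1 = 0 := by
      have := congrArg (Nat.cast (R := F)) hcard
      simpa using this
    simp only [hv, map_neg, map_sum, map_smul, smul_eq_mul]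
    rw [h1]
    linear_combination -h2
  refine ⟨v, hf, by simp [hfv], fun P hP hfP g hgP hg => ?_⟩
  obtain ⟨n, -, hproj⟩ := h P hP hfP
  obtain ⟨hinj, himg⟩ := hproj g hgP hg
  have hgv : g v / f v = g n / f n := by
    have hsum : ∑ u ∈ offLine S f, g u.rep / f u.rep = -(g n / f n) := by
      rw [← Finset.sum_image (f := fun x => x) (g := fun u : PGPoint F => g u.rep / f u.rep) hinj,
        himg]
      have h1 := Finset.sum_erase_add Finset.univ (fun x : F => x) (Finset.mem_univ (g n / f n))
      have h2 := FiniteField.sum_pow_lt_card_sub_one F 1 (by omega)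
      simp only [pow_one] at h2
      rw [h2] at h1
      linear_combination h1
    rw [hfv, div_one, hv, map_neg, map_sum, ← neg_eq_iff_eq_neg.2 hsum]
    congr 1
    exact Finset.sum_congr rfl fun u _ => by rw [map_smul, smul_eq_mul, div_eq_inv_mul]
  exact ⟨hinj, by rw [hgv, himg]⟩

lemma IsNucleus.disjoint {S : Finset (PGPoint F)} {f g : PGForm F} {n : Fin 3 → F}
    (h : IsNucleus S f n) (hg : ∀ c : F, g ≠ c • f) (hcard : 3 ≤ (onLine S g).card)
    {P : PGPoint F} (hP : P ∈ S) (hfP : f P.rep = 0) : g P.rep ≠ 0 := by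
  classical
  intro hgP
  obtain ⟨hinj, -⟩ := h.projects P hP hfP g hgP hg
  have hmem : P ∈ onLine S g := by simp [hP, hgP]
  have : 1 < ((onLine S g).erase P).card := by
    rw [Finset.card_erase_of_mem hmem]
    omega
  obtain ⟨Q, hQ, R, hR, hQR⟩ := Finset.one_lt_card.1 this
  have hoff : ∀ X ∈ (onLine S g).erase P, X ∈ offLine S f := by
    intro X hX
    simp only [Finset.mem_erase, mem_onLine] at hX
    refine mem_offLine.2 ⟨hX.2.1, fun hfX => ?_⟩
    obtain ⟨c, hc⟩ := pgForm_eq_smul hX.1.symm h.ne_zero hfP hfX hgP hX.2.2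
    exact hg c hc
  refine hQR (hinj (hoff Q hQ) (hoff R hR) ?_)
  simp only [Finset.mem_erase, mem_onLine] at hQ hR
  simp [hQ.2.2, hR.2.2]

/-- A polynomial of degree less than `#s` agreeing on `s` with the derivative of
`∏ x ∈ s, (X - x)` has leading coefficient `#s`. -/
lemma coeff_eq_card_of_eval_eq_prod_erase {ι K : Type*} [DecidableEq ι] [Field K] {s : Finset ι}
    {b : ι → K} (hb : Set.InjOn b s) {k : ℕ} (hs : s.card = k + 1) {p : Polynomial K}
    (hp : p.natDegree ≤ k)
    (h : ∀ i ∈ s, p.eval (b i) = ∏ j ∈ s.erase i, (b i - b j)) : p.coeff k = s.card := by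
  have hnat : (Lagrange.nodal s b).natDegree = k + 1 := by
    rw [Lagrange.natDegree_nodal, hs]
  have heq : p = Polynomial.derivative (Lagrange.nodal s b) := by
    refine Polynomial.eq_of_degrees_lt_of_eval_index_eq s hb ?_ ?_ ?_
    · rw [hs]
      exact Polynomial.degree_le_natDegree.trans_lt (by exact_mod_cast Nat.lt_succ_of_le hp)
    · rw [← Lagrange.degree_nodal (v := b)]
      exact Polynomial.degree_derivative_lt Lagrange.nodal_ne_zero
    · intro i hi
      rw [h i hi, Lagrange.eval_nodal_derivative_eval_node_eq hi, Lagrange.eval_nodal]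
  rw [heq, Polynomial.coeff_derivative]
  have hm : (Lagrange.nodal s b).coeff (k + 1) = 1 := by
    have := (Lagrange.nodal_monic (s := s) (v := b)).coeff_natDegree
    rwa [hnat] at this
  rw [hm, hs]
  push_cast
  ring

lemma Finset.exists_mem_ne_ne {α : Type*} {u : Finset α} (hu : 3 ≤ u.card) (i j : α) :
    ∃ k ∈ u, k ≠ i ∧ k ≠ j := by
  classical
  have : 0 < ((u.erase i).erase j).card := by
    have h1 := Finset.pred_card_le_card_erase (s := u) (a := i)
    have h2 := Finset.pred_card_le_card_erase (s := u.erase i) (a := j)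
    omega
  obtain ⟨k, hk⟩ := Finset.card_pos.1 this
  simp only [Finset.mem_erase] at hk
  exact ⟨k, hk.2.2, hk.2.1, hk.1⟩

/-- Two rank-two kernels that differ by a row and column scaling come either from forms
degenerate in opposite variables, or from proportional forms. -/
lemma proportional_of_scaled_forms {ι κ K : Type*} [Field K] {s : Finset ι} {t : Finset κ}
    (hs : 3 ≤ s.card) (ht : 3 ≤ t.card) {b : ι → K} {c : κ → K} (hb : Set.InjOn b s)
    (hc : Set.InjOn c t) {β : ι → K} {γ : κ → K} {x₁ y₁ z₁ x₂ y₂ z₂ : K}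
    (hx₁ : x₁ ≠ 0) (hy₂ : y₂ ≠ 0)
    (h₁ : ∀ i ∈ s, ∀ j ∈ t, z₁ - c j * x₁ - b i * y₁ ≠ 0)
    (h₂ : ∀ i ∈ s, ∀ j ∈ t, z₂ - c j * x₂ - b i * y₂ ≠ 0)
    (hγ : ∀ j ∈ t, γ j ≠ 0)
    (h : ∀ i ∈ s, ∀ j ∈ t,
      γ j * (z₁ - c j * x₁ - b i * y₁) = β i * (z₂ - c j * x₂ - b i * y₂)) :
    (y₁ = 0 ∧ x₂ = 0) ∨ ∃ r : K, r ≠ 0 ∧ x₂ = r * x₁ ∧ y₂ = r * y₁ ∧ z₂ = r * z₁ ∧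
      ∀ i ∈ s, ∀ j ∈ t, γ j = β i * r := by
  classical
  have hβ : ∀ i ∈ s, β i ≠ 0 := by
    intro i hi hβi
    obtain ⟨j, hj⟩ := Finset.card_pos.1 (show 0 < t.card by omega)
    have := h i hi j hj
    rw [hβi, zero_mul] at this
    exact mul_ne_zero (hγ j hj) (h₁ i hi j hj) this
  have key : ∀ i ∈ s, ∀ i' ∈ s, i ≠ i' → ∀ j ∈ t, ∀ j' ∈ t, j ≠ j' →
      x₁ * y₁ * ((z₂ - c j * x₂ - b i * y₂) * (z₂ - c j' * x₂ - b i' * y₂)) =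
      x₂ * y₂ * ((z₁ - c j * x₁ - b i * y₁) * (z₁ - c j' * x₁ - b i' * y₁)) := by
    intro i hi i' hi' hii j hj j' hj' hjj
    have e1 := h i hi j hj
    have e2 := h i hi j' hj'
    have e3 := h i' hi' j hj
    have e4 := h i' hi' j' hj'
    have hbb : b i - b i' ≠ 0 := sub_ne_zero.2 fun e => hii (hb hi hi' e)
    have hcc : c j - c j' ≠ 0 := sub_ne_zero.2 fun e => hjj (hc hj hj' e)
    have hne' : γ j * γ j' ≠ 0 := mul_ne_zero (hγ j hj) (hγ j' hj')
    have hcross : (z₁ - c j * x₁ - b i * y₁) * (z₁ - c j' * x₁ - b i' * y₁) *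
        ((z₂ - c j' * x₂ - b i * y₂) * (z₂ - c j * x₂ - b i' * y₂)) =
        (z₂ - c j * x₂ - b i * y₂) * (z₂ - c j' * x₂ - b i' * y₂) *
        ((z₁ - c j' * x₁ - b i * y₁) * (z₁ - c j * x₁ - b i' * y₁)) := by
      have hprod : (β i * β i') * (γ j * γ j') ≠ 0 :=
        mul_ne_zero (mul_ne_zero (hβ i hi) (hβ i' hi')) hne'
      refine mul_left_cancel₀ hprod ?_
      calc _ = (γ j * (z₁ - c j * x₁ - b i * y₁)) * (γ j' * (z₁ - c j' * x₁ - b i' * y₁)) *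
            ((β i * (z₂ - c j' * x₂ - b i * y₂)) * (β i' * (z₂ - c j * x₂ - b i' * y₂))) := by
            ring
        _ = _ := by
            rw [e1, e4, ← e2, ← e3]
            ring
    refine mul_left_cancel₀ (mul_ne_zero hbb hcc) ?_
    linear_combination -hcross
  obtain ⟨i₀, hi₀⟩ := Finset.card_pos.1 (show 0 < s.card by omega)
  obtain ⟨j₀, hj₀⟩ := Finset.card_pos.1 (show 0 < t.card by omega)
  obtain ⟨i₁, hi₁, hi₁₀, -⟩ := Finset.exists_mem_ne_ne hs i₀ i₀
  obtain ⟨j₁, hj₁, hj₁₀, -⟩ := Finset.exists_mem_ne_ne ht j₀ j₀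
  have k₀ := key i₀ hi₀ i₁ hi₁ hi₁₀.symm j₀ hj₀ j₁ hj₁ hj₁₀.symm
  by_cases hy₁ : y₁ = 0
  · left
    refine ⟨hy₁, ?_⟩
    rw [hy₁, mul_zero, zero_mul] at k₀
    by_contra hx₂
    exact mul_ne_zero (mul_ne_zero hx₂ hy₂)
      (mul_ne_zero (h₁ i₀ hi₀ j₀ hj₀) (h₁ i₁ hi₁ j₁ hj₁)) (by rw [hy₁, ← k₀])
  right
  have hx₂ : x₂ ≠ 0 := by
    intro hx₂
    have := mul_ne_zero (mul_ne_zero hx₁ hy₁)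
      (mul_ne_zero (h₂ i₀ hi₀ j₀ hj₀) (h₂ i₁ hi₁ j₁ hj₁))
    rw [k₀, hx₂, zero_mul, zero_mul] at this
    exact this rfl
  set ρ : ι → κ → K := fun i j => (z₂ - c j * x₂ - b i * y₂) / (z₁ - c j * x₁ - b i * y₁) with hρ
  have hρne : ∀ i ∈ s, ∀ j ∈ t, ρ i j ≠ 0 := fun i hi j hj =>
    div_ne_zero (h₂ i hi j hj) (h₁ i hi j hj)
  have hρmul : ∀ i ∈ s, ∀ i' ∈ s, i ≠ i' → ∀ j ∈ t, ∀ j' ∈ t, j ≠ j' →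
      ρ i j * ρ i' j' = x₂ * y₂ / (x₁ * y₁) := by
    intro i hi i' hi' hii j hj j' hj' hjj
    have := key i hi i' hi' hii j hj j' hj' hjj
    rw [hρ]
    dsimp only
    rw [div_mul_div_comm, div_eq_div_iff (mul_ne_zero (h₁ i hi j hj) (h₁ i' hi' j' hj'))
      (mul_ne_zero hx₁ hy₁)]
    linear_combination this
  have hrow : ∀ i ∈ s, ∀ i' ∈ s, ∀ j ∈ t, ρ i j = ρ i' j := by
    intro i hi i' hi' j hj
    obtain ⟨k, hk, hki, hki'⟩ := Finset.exists_mem_ne_ne hs i i'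
    obtain ⟨l, hl, hlj, -⟩ := Finset.exists_mem_ne_ne ht j j
    exact mul_right_cancel₀ (hρne k hk l hl)
      ((hρmul i hi k hk hki.symm j hj l hl hlj.symm).trans
        (hρmul i' hi' k hk hki'.symm j hj l hl hlj.symm).symm)
  have hcol : ∀ i ∈ s, ∀ j ∈ t, ∀ j' ∈ t, ρ i j = ρ i j' := by
    intro i hi j hj j' hj'
    obtain ⟨k, hk, hki, -⟩ := Finset.exists_mem_ne_ne hs i i
    obtain ⟨l, hl, hlj, hlj'⟩ := Finset.exists_mem_ne_ne ht j j'
    exact mul_right_cancel₀ (hρne k hk l hl)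
      ((hρmul i hi k hk hki.symm j hj l hl hlj.symm).trans
        (hρmul i hi k hk hki.symm j' hj' l hl hlj'.symm).symm)
  set r := ρ i₀ j₀ with hr
  have hall : ∀ i ∈ s, ∀ j ∈ t,
      z₂ - c j * x₂ - b i * y₂ = r * (z₁ - c j * x₁ - b i * y₁) := by
    intro i hi j hj
    rw [hr, hrow i₀ hi₀ i hi j₀ hj₀, hcol i hi j₀ hj₀ j hj, hρ]
    exact (div_mul_cancel₀ _ (h₁ i hi j hj)).symm
  have a00 := hall i₀ hi₀ j₀ hj₀
  have a10 := hall i₁ hi₁ j₀ hj₀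
  have a01 := hall i₀ hi₀ j₁ hj₁
  have hx : x₂ = r * x₁ := by
    refine mul_left_cancel₀ (sub_ne_zero.2 fun e => hj₁₀ (hc hj₁ hj₀ e)) ?_
    linear_combination a00 - a01
  have hy : y₂ = r * y₁ := by
    refine mul_left_cancel₀ (sub_ne_zero.2 fun e => hi₁₀ (hb hi₁ hi₀ e)) ?_
    linear_combination a00 - a10
  refine ⟨r, hρne i₀ hi₀ j₀ hj₀, hx, hy, ?_, ?_⟩
  · linear_combination a00 + c j₀ * hx + b i₀ * hy
  · intro i hi j hj
    refine mul_right_cancel₀ (h₁ i hi j hj) ?_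
    rw [h i hi j hj, hall i hi j hj]
    ring

open Classical in
lemma IsNucleus.prod_split {S : Finset (PGPoint F)} {f g : PGForm F} {n : Fin 3 → F}
    (h : IsNucleus S f n) (hdisj : ∀ u ∈ S, f u.rep = 0 → g u.rep ≠ 0) {P Q : PGPoint F}
    (hP : P ∈ S) (hfP : f P.rep = 0) (hQ : Q ∈ S) (hgQ : g Q.rep = 0) {m : PGForm F}
    (hm : m ≠ 0) (hmP : m P.rep = 0) (hmQ : m Q.rep = 0) :
    m n ≠ 0 ∧ (∀ u ∈ offLine (offLine S f) g, m u.rep ≠ 0) ∧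
    (∏ u ∈ (onLine S g).erase Q, m u.rep / f u.rep) *
      ((∏ u ∈ offLine (offLine S f) g, m u.rep) / ∏ u ∈ offLine (offLine S f) g, f u.rep) *
      (m n / f n) = -1 := by
  have hfQ : f Q.rep ≠ 0 := fun hfQ => hdisj Q hQ hfQ hgQ
  obtain ⟨hne, hn, hprod⟩ := h.prod_eq hP hfP hQ hfQ hm hmP hmQ
  have hset : (offLine S f).erase Q = (onLine S g).erase Q ∪ offLine (offLine S f) g := by
    ext u
    have := hdisj u
    have hu : u = Q → g u.rep = 0 := fun e => e ▸ hgQ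
    simp only [Finset.mem_erase, Finset.mem_union, mem_offLine, mem_onLine]
    tauto
  refine ⟨hn, ?_, ?_⟩
  · intro u hu
    simp only [mem_offLine] at hu
    exact hne u hu.1.1 hu.1.2 fun e => hu.2 (e ▸ hgQ)
  · rw [hset, Finset.prod_union] at hprod
    · rwa [← Finset.prod_div_distrib]
    · rw [Finset.disjoint_left]
      intro u hu hu'
      simp only [Finset.mem_erase, mem_offLine, mem_onLine] at hu hu'
      exact hu'.2 hu.2.2

/-- Two secants with nuclei: either each contains the nucleus of the other, or the nuclei
coincide and the characteristic divides the length of the secants. -/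
lemma IsNucleus.pair {S : Finset (PGPoint F)} {f₁ f₂ : PGForm F} {n₁ n₂ : Fin 3 → F}
    (h₁ : IsNucleus S f₁ n₁) (h₂ : IsNucleus S f₂ n₂) (hf : ∀ c : F, f₂ ≠ c • f₁) {a : ℕ}
    (ha : 3 ≤ a) (hc₁ : (onLine S f₁).card = a) (hc₂ : (onLine S f₂).card = a) :
    (f₂ n₁ = 0 ∧ f₁ n₂ = 0) ∨ ((a : F) = 0 ∧ ∃ r : F, r ≠ 0 ∧ n₂ = r • n₁) := by
  classical
  have hd₁ : ∀ u ∈ S, f₁ u.rep = 0 → f₂ u.rep ≠ 0 := fun u hu hfu =>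
    h₁.disjoint hf (by omega) hu hfu
  have hd₂ : ∀ u ∈ S, f₂ u.rep = 0 → f₁ u.rep ≠ 0 := fun u hu h2 h1 => hd₁ u hu h1 h2
  obtain ⟨P₀, hP₀⟩ := Finset.card_pos.1 (show 0 < (onLine S f₁).card by omega)
  obtain ⟨Q₀, hQ₀⟩ := Finset.card_pos.1 (show 0 < (onLine S f₂).card by omega)
  obtain ⟨hP₀S, hP₀⟩ := mem_onLine.1 hP₀
  obtain ⟨hQ₀S, hQ₀⟩ := mem_onLine.1 hQ₀
  obtain ⟨ν, hν, hνP₀, hνQ₀⟩ := exists_pgForm_through P₀ Q₀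
  have hmne : ∀ x y : F, ν - x • f₁ - y • f₂ ≠ 0 := by
    intro x y h0
    have e1 := LinearMap.congr_fun h0 P₀.rep
    have e2 := LinearMap.congr_fun h0 Q₀.rep
    have hy : y = 0 := by simpa [hνP₀, hP₀, hd₁ P₀ hP₀S hP₀] using e1
    have hx : x = 0 := by simpa [hνQ₀, hQ₀, hd₂ Q₀ hQ₀S hQ₀] using e2
    exact hν (by simpa [hx, hy] using h0)
  have hcoord : ∀ v : Fin 3 → F, f₁ v = 0 → f₂ v = 0 → ν v = 0 → v = 0 := by
    intro v hv₁ hv₂ hv₃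
    obtain ⟨c, rfl⟩ := eq_smul_rep_of_forms_eq_zero (P := P₀) h₁.ne_zero
      (pgForm_ne_smul hν hνQ₀ (hd₂ Q₀ hQ₀S hQ₀)) hP₀ hνP₀ hv₁ hv₃
    have : c = 0 := by simpa [hd₁ P₀ hP₀S hP₀] using hv₂
    simp [this]
  set b : PGPoint F → F := fun P => ν P.rep / f₂ P.rep with hb
  set c : PGPoint F → F := fun Q => ν Q.rep / f₁ Q.rep with hc
  have hbinj : Set.InjOn b (onLine S f₁) := by
    intro P hP P' hP' e
    simp only [Finset.mem_coe, mem_onLine] at hP hP'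
    have n1 := hd₁ P hP.1 hP.2
    have n2 := hd₁ P' hP'.1 hP'.2
    refine pgPoint_eq_of_smul_rep_eq (c := f₂ P'.rep) (d := f₂ P.rep) n2 (sub_eq_zero.1 ?_)
    simp only [hb, div_eq_div_iff n1 n2] at e
    apply hcoord <;> simp only [map_sub, map_smul, smul_eq_mul, hP.2, hP'.2]
    · ring
    · ring
    · linear_combination e
  have hcinj : Set.InjOn c (onLine S f₂) := by
    intro P hP P' hP' e
    simp only [Finset.mem_coe, mem_onLine] at hP hP'
    have n1 := hd₂ P hP.1 hP.2
    have n2 := hd₂ P' hP'.1 hP'.2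
    refine pgPoint_eq_of_smul_rep_eq (c := f₁ P'.rep) (d := f₁ P.rep) n2 (sub_eq_zero.1 ?_)
    simp only [hc, div_eq_div_iff n1 n2] at e
    apply hcoord <;> simp only [map_sub, map_smul, smul_eq_mul, hP.2, hP'.2]
    · ring
    · ring
    · linear_combination e
  set T := offLine (offLine S f₁) f₂ with hT
  have hT' : offLine (offLine S f₂) f₁ = T := by
    ext u
    simp only [hT, mem_offLine]
    tauto
  have hΛ₁ : ∏ u ∈ T, f₁ u.rep ≠ 0 := Finset.prod_ne_zero_iff.2 fun u hu =>
    (mem_offLine.1 (mem_offLine.1 hu).1).2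
  have hΛ₂ : ∏ u ∈ T, f₂ u.rep ≠ 0 := Finset.prod_ne_zero_iff.2 fun u hu => (mem_offLine.1 hu).2
  set γ : PGPoint F → F := fun Q =>
    (∏ u ∈ (onLine S f₂).erase Q, (c u - c Q)) * (∏ u ∈ T, f₂ u.rep) * f₂ n₂ with hγ
  set β : PGPoint F → F := fun P =>
    (∏ u ∈ (onLine S f₁).erase P, (b u - b P)) * (∏ u ∈ T, f₁ u.rep) * f₁ n₁ with hβ
  have hγne : ∀ Q ∈ onLine S f₂, γ Q ≠ 0 := by
    intro Q hQ
    refine mul_ne_zero (mul_ne_zero (Finset.prod_ne_zero_iff.2 fun u hu => ?_) hΛ₂) h₂.off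
    rw [Finset.mem_erase] at hu
    exact sub_ne_zero.2 fun e => hu.1 (hcinj hu.2 hQ e)
  have main : ∀ P ∈ onLine S f₁, ∀ Q ∈ onLine S f₂,
      ν n₁ - c Q * f₁ n₁ - b P * f₂ n₁ ≠ 0 ∧ ν n₂ - c Q * f₁ n₂ - b P * f₂ n₂ ≠ 0 ∧
      γ Q * (ν n₁ - c Q * f₁ n₁ - b P * f₂ n₁) = β P * (ν n₂ - c Q * f₁ n₂ - b P * f₂ n₂) := by
    intro P hP Q hQ
    rw [mem_onLine] at hP hQ
    have nP := hd₁ P hP.1 hP.2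
    have nQ := hd₂ Q hQ.1 hQ.2
    set m : PGForm F := ν - c Q • f₁ - b P • f₂ with hm
    have hmv : ∀ v, m v = ν v - c Q * f₁ v - b P * f₂ v := fun v => by simp [hm]
    have hmP : m P.rep = 0 := by
      rw [hmv, hP.2, hb]
      field_simp
      ring
    have hmQ : m Q.rep = 0 := by
      rw [hmv, hQ.2, hc]
      field_simp
      ring
    obtain ⟨hn₁, hmT, e₁⟩ := h₁.prod_split hd₁ hP.1 hP.2 hQ.1 hQ.2 (hmne _ _) hmP hmQ
    obtain ⟨hn₂, -, e₂⟩ := h₂.prod_split hd₂ hQ.1 hQ.2 hP.1 hP.2 (hmne _ _) hmQ hmP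
    rw [hT', Finset.prod_congr rfl (g := fun u => b u - b P) (fun u hu => by
      simp only [Finset.mem_erase, mem_onLine] at hu
      have := hd₁ u hu.2.1 hu.2.2
      rw [hmv, hu.2.2, hb]
      field_simp
      ring)] at e₂
    rw [← hT, Finset.prod_congr rfl (g := fun u => c u - c Q) (fun u hu => by
      simp only [Finset.mem_erase, mem_onLine] at hu
      have := hd₂ u hu.2.1 hu.2.2
      rw [hmv, hu.2.2, hc]
      field_simp
      ring)] at e₁
    have hM : ∏ u ∈ T, m u.rep ≠ 0 := Finset.prod_ne_zero_iff.2 hmT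
    rw [← hmv, ← hmv]
    refine ⟨hn₁, hn₂, mul_left_cancel₀ hM ?_⟩
    have e := e₁.trans e₂.symm
    have o₁ := h₁.off
    have o₂ := h₂.off
    rw [hγ, hβ]
    field_simp at e
    linear_combination e
  rcases proportional_of_scaled_forms (by omega) (by omega) hbinj hcinj h₁.off h₂.off
    (fun P hP Q hQ => (main P hP Q hQ).1) (fun P hP Q hQ => (main P hP Q hQ).2.1) hγne
    (fun P hP Q hQ => (main P hP Q hQ).2.2) with hl | ⟨r, hr, hx, hy, hz, hconst⟩
  · exact Or.inl hl
  right
  constructor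
  · obtain ⟨k, rfl⟩ : ∃ k, a = k + 1 := ⟨a - 1, by omega⟩
    have hconst' : ∀ Q ∈ onLine S f₂, (Polynomial.C ((-1) ^ k *
        (β P₀ * r / ((∏ u ∈ T, f₂ u.rep) * f₂ n₂)))).eval (c Q) =
        ∏ u ∈ (onLine S f₂).erase Q, (c Q - c u) := by
      intro Q hQ
      have h2 := h₂.off
      rw [Polynomial.eval_C, ← hconst P₀ (by simp [hP₀S, hP₀]) Q hQ,
        Finset.prod_congr rfl (fun u _ => (neg_sub (c u) (c Q)).symm), Finset.prod_neg,
        Finset.card_erase_of_mem hQ, hc₂, hγ, Nat.add_sub_cancel]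
      field_simp
    have := coeff_eq_card_of_eval_eq_prod_erase hcinj hc₂
      (by rw [Polynomial.natDegree_C]; omega) hconst'
    rw [hc₂, Polynomial.coeff_C_of_ne_zero (by omega)] at this
    exact this.symm
  · refine ⟨r, hr, sub_eq_zero.1 (hcoord _ ?_ ?_ ?_)⟩ <;>
      simp only [map_sub, map_smul, smul_eq_mul, hx, hy, hz, sub_self]

open Classical in
lemma prod_sub_erase_of_bijOn {ι : Type*} {s : Finset ι} {b : ι → F}
    (hb : Set.BijOn b s Set.univ) {i : ι} (hi : i ∈ s) : ∏ j ∈ s.erase i, (b i - b j) = -1 := by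
  rw [← prod_univ_erase_zero (F := F)]
  refine Finset.prod_bij (fun j _ => b i - b j) ?_ ?_ ?_ (fun _ _ => rfl)
  · intro j hj
    rw [Finset.mem_erase] at hj ⊢
    exact ⟨sub_ne_zero.2 fun e => hj.1 (hb.injOn hj.2 hi e.symm), Finset.mem_univ _⟩
  · intro j hj k hk e
    exact hb.injOn (Finset.mem_of_mem_erase hj) (Finset.mem_of_mem_erase hk) (sub_right_inj.1 e)
  · intro x hx
    obtain ⟨j, hj, hjx⟩ := hb.surjOn (Set.mem_univ (b i - x))
    refine ⟨j, Finset.mem_erase.2 ⟨?_, hj⟩, by rw [hjx]; ring⟩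
    rintro rfl
    exact Finset.ne_of_mem_erase hx (by linear_combination hjx)

/-- If the characteristic divides the length of a secant with a nucleus, every unique tangent
at a point off the secant passes through that nucleus. -/
lemma IsNucleus.tangent_eq_zero {S : Finset (PGPoint F)} {f : PGForm F} {n : Fin 3 → F}
    (h : IsNucleus S f n) (hcard : (offLine S f).card + 1 = Fintype.card F)
    (htwo : 2 ≤ (onLine S f).card) (hzero : ((onLine S f).card : F) = 0) {R : PGPoint F}
    (hR : R ∈ S) (hfR : f R.rep ≠ 0) {t : PGForm F} (htR : t R.rep = 0)
    (htS : ∀ u ∈ S, t u.rep = 0 → u = R)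
    (huniq : ∀ g : PGForm F, g R.rep = 0 → (∀ c : F, g ≠ c • t) →
      ∃ u ∈ S, u ≠ R ∧ g u.rep = 0) : t n = 0 := by
  classical
  by_contra htn
  obtain ⟨P₀, hP₀⟩ := Finset.card_pos.1 (show 0 < (onLine S f).card by omega)
  obtain ⟨hP₀S, hP₀⟩ := mem_onLine.1 hP₀
  obtain ⟨σ, hσ, hσR, hσP₀⟩ := exists_pgForm_through R P₀
  have htP : ∀ P ∈ S, f P.rep = 0 → t P.rep ≠ 0 := fun P hP hfP htP =>
    hfR (htS P hP htP ▸ hfP)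
  have hσt : ∀ c : F, σ ≠ c • t := pgForm_ne_smul hσ hσP₀ (htP P₀ hP₀S hP₀)
  set b : PGPoint F → F := fun u => σ u.rep / t u.rep with hb
  have hmne : ∀ x : F, σ - x • t ≠ 0 := fun x hx => hσt x (sub_eq_zero.1 hx)
  have hmR : ∀ x : F, (σ - x • t) R.rep = 0 := fun x => by simp [hσR, htR]
  have hbinj : Set.InjOn b (onLine S f) := by
    intro P hP P' hP' e
    simp only [Finset.mem_coe, mem_onLine] at hP hP'
    by_contra hne
    have n1 := htP P hP.1 hP.2
    have n2 := htP P' hP'.1 hP'.2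
    obtain ⟨c, hc⟩ := pgForm_eq_smul (g := σ - b P • t) hne h.ne_zero hP.2 hP'.2
      (by simp [hb, n1]) (by rw [e]; simp [hb, n2])
    exact pgForm_ne_smul (hmne _) (hmR _) hfR c hc
  have hsurj : Set.SurjOn b (S.erase R) Set.univ := by
    intro x _
    obtain ⟨u, hu, huR, hux⟩ := huniq (σ - x • t) (hmR x) (fun c hc =>
      hσt (c + x) (by rw [add_smul, ← hc, sub_add_cancel]))
    have htu : t u.rep ≠ 0 := fun e => huR (htS u hu e)
    refine ⟨u, by simp [hu, huR], ?_⟩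
    rw [hb]
    dsimp only
    rw [div_eq_iff htu]
    simpa [sub_eq_zero] using hux
  have hsub : onLine S f ⊆ S.erase R := by
    intro u hu
    rw [mem_onLine] at hu
    exact Finset.mem_erase.2 ⟨fun e => hfR (e ▸ hu.2), hu.1⟩
  obtain ⟨E', hE₁, hE₂, hE⟩ := hbinj.bijOn_image.exists_extend_of_subset
    (Finset.coe_subset.2 hsub) (Set.subset_univ _) hsurj
  obtain ⟨E, rfl⟩ := ((S.erase R).finite_toSet.subset hE₂).exists_finset_coe
  rw [Finset.coe_subset] at hE₁ hE₂
  have hEcard : E.card = Fintype.card F := by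
    rw [← Finset.card_image_of_injOn hE.injOn, ← Finset.card_univ]
    congr 1
    rw [← Finset.coe_inj, Finset.coe_image, hE.image_eq, Finset.coe_univ]
  have hunion : S.erase R = onLine S f ∪ (offLine S f).erase R := by
    ext u
    have : u = R → f u.rep ≠ 0 := fun e => e ▸ hfR
    simp only [Finset.mem_erase, Finset.mem_union, mem_onLine, mem_offLine]
    tauto
  have hdisj : Disjoint (onLine S f) ((offLine S f).erase R) := by
    rw [Finset.disjoint_left]
    intro u hu hu'
    simp only [Finset.mem_erase, mem_onLine, mem_offLine] at hu hu'
    exact hu'.2.2 hu.2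
  obtain ⟨k, hk⟩ : ∃ k, (onLine S f).card = k + 2 := ⟨(onLine S f).card - 2, by omega⟩
  set D := S.erase R \ E with hD
  have hDcard : D.card = k := by
    have h1 := Finset.card_sdiff_add_card_eq_card hE₂
    have h2 : (S.erase R).card = (onLine S f).card + ((offLine S f).erase R).card := by
      rw [hunion, Finset.card_union_of_disjoint hdisj]
    rw [Finset.card_erase_of_mem (s := offLine S f) (by simp [hR, hfR])] at h2
    have h3 : 0 < (offLine S f).card := Finset.card_pos.2 ⟨R, by simp [hR, hfR]⟩
    rw [← hD] at h1
    omega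
  set A : F := (∏ u ∈ (offLine S f).erase R, (-t u.rep / f u.rep)) * (-t n / f n) with hA
  have hA0 : A ≠ 0 := by
    refine mul_ne_zero (Finset.prod_ne_zero_iff.2 fun u hu => ?_)
      (div_ne_zero (neg_ne_zero.2 htn) h.off)
    simp only [Finset.mem_erase, mem_offLine] at hu
    exact div_ne_zero (neg_ne_zero.2 fun e => hu.1 (htS u hu.2.1 e)) hu.2.2
  set p : Polynomial F := Polynomial.C A *
    (Lagrange.nodal D b * (Polynomial.X - Polynomial.C (σ n / t n))) with hp
  have hmon : (Lagrange.nodal D b * (Polynomial.X - Polynomial.C (σ n / t n))).Monic :=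
    Lagrange.nodal_monic.mul (Polynomial.monic_X_sub_C _)
  have hdeg : (Lagrange.nodal D b * (Polynomial.X - Polynomial.C (σ n / t n))).natDegree =
      k + 1 := by
    rw [Polynomial.Monic.natDegree_mul Lagrange.nodal_monic (Polynomial.monic_X_sub_C _),
      Lagrange.natDegree_nodal, Polynomial.natDegree_X_sub_C, hDcard]
  have heval : ∀ P ∈ onLine S f, p.eval (b P) = ∏ u ∈ (onLine S f).erase P, (b P - b u) := by
    intro P hP
    obtain ⟨hPS, hfP⟩ := mem_onLine.1 hP
    have htP' := htP P hPS hfP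
    obtain ⟨-, -, e⟩ := h.prod_eq hPS hfP hR hfR (hmne (b P)) (by simp [hb, htP']) (hmR _)
    have hfac : ∏ u ∈ (offLine S f).erase R, (σ - b P • t) u.rep / f u.rep =
        (∏ u ∈ (offLine S f).erase R, (-t u.rep / f u.rep)) *
          ∏ u ∈ (offLine S f).erase R, (b P - b u) := by
      rw [← Finset.prod_mul_distrib]
      refine Finset.prod_congr rfl fun u hu => ?_
      simp only [Finset.mem_erase, mem_offLine] at hu
      have htu : t u.rep ≠ 0 := fun e => hu.1 (htS u hu.2.1 e)
      have hbu : σ u.rep = b u * t u.rep := by simp [hb, htu]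
      rw [LinearMap.sub_apply, LinearMap.smul_apply, smul_eq_mul, hbu]
      ring
    have hn' : (σ - b P • t) n / f n = (-t n / f n) * (b P - σ n / t n) := by
      rw [LinearMap.sub_apply, LinearMap.smul_apply, smul_eq_mul]
      field_simp
      ring
    rw [hfac, hn'] at e
    have hfull : (∏ u ∈ (onLine S f).erase P, (b P - b u)) *
        ∏ u ∈ (offLine S f).erase R, (b P - b u) = -∏ u ∈ D, (b P - b u) := by
      have hPE : P ∈ E := hE₁ hP
      have e1 : (S.erase R).erase P = (onLine S f).erase P ∪ (offLine S f).erase R := by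
        rw [hunion, Finset.erase_union_distrib, Finset.erase_eq_of_notMem (a := P)
          (s := (offLine S f).erase R) (Finset.disjoint_left.1 hdisj hP)]
      have e2 : (S.erase R).erase P = E.erase P ∪ D := by
        ext u
        have h1 := @hE₂ u
        have h2 : u = P → u ∈ E := fun e => e ▸ hPE
        simp only [hD, Finset.mem_erase, Finset.mem_union, Finset.mem_sdiff] at h1 ⊢
        tauto
      rw [← Finset.prod_union (hdisj.mono_left (Finset.erase_subset _ _)), ← e1, e2,
        Finset.prod_union (Finset.disjoint_sdiff.mono_left (Finset.erase_subset _ _)),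
        prod_sub_erase_of_bijOn hE hPE, neg_one_mul]
    rw [hp, Polynomial.eval_mul, Polynomial.eval_mul, Lagrange.eval_nodal, Polynomial.eval_C,
      Polynomial.eval_sub, Polynomial.eval_X, Polynomial.eval_C, hA]
    linear_combination (-(∏ u ∈ (onLine S f).erase P, (b P - b u))) * e +
      A * (b P - σ n / t n) * hfull
  have hcoeff : p.coeff (k + 1) = _ := coeff_eq_card_of_eval_eq_prod_erase hbinj hk
    ((Polynomial.natDegree_C_mul_le _ _).trans hdeg.le) heval
  rw [hp, Polynomial.coeff_C_mul, ← hdeg, hmon.coeff_natDegree, mul_one, hzero] at hcoeff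
  exact hA0 hcoeff

open Classical in
/-- Lemma of tangents at a vertex of a triangle inscribed in `S`. -/
lemma IsNucleus.prod_triangle {S : Finset (PGPoint F)} {f : PGForm F} {n : Fin 3 → F}
    (h : IsNucleus S f n) {k : ℕ} (hk : (onLine S f).card = k + 2) {P Q R : PGPoint F}
    (hP : P ∈ S) (hQ : Q ∈ S) (hR : R ∈ S) (hfP : f P.rep = 0) (hfQ : f Q.rep ≠ 0)
    (hfR : f R.rep ≠ 0) (hQR : Q ≠ R) {β γ : PGForm F} (hβ : β ≠ 0) (hγ : γ ≠ 0)
    (hβP : β P.rep = 0) (hβR : β R.rep = 0) (hγP : γ P.rep = 0) (hγQ : γ Q.rep = 0) :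
    (∏ u ∈ ((S.erase P).erase Q).erase R, β u.rep / γ u.rep) * (β n / γ n) =
      -(-(f R.rep * β Q.rep) / (f Q.rep * γ R.rep)) ^ k := by
  obtain ⟨hβne, hβn, eβ⟩ := h.prod_eq hP hfP hR hfR hβ hβP hβR
  obtain ⟨hγne, hγn, eγ⟩ := h.prod_eq hP hfP hQ hfQ hγ hγP hγQ
  have hβQ := hβne Q hQ hfQ hQR
  have hγR := hγne R hR hfR hQR.symm
  set e : F := -(f R.rep * β Q.rep) / (f Q.rep * γ R.rep) with he
  have hPQ : P ≠ Q := fun e => hfQ (e ▸ hfP)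
  have hon : ∀ u ∈ (onLine S f).erase P, β u.rep / γ u.rep = e := by
    intro u hu
    simp only [Finset.mem_erase, mem_onLine] at hu
    have hγu : γ u.rep ≠ 0 := by
      intro hγu
      obtain ⟨c, hc⟩ := pgForm_eq_smul hu.1.symm h.ne_zero hfP hu.2.2 hγP hγu
      exact pgForm_ne_smul hγ hγQ hfQ c hc
    obtain ⟨c, hc⟩ := pgForm_eq_smul hPQ hγ hγP hγQ
      (g := (f Q.rep * γ R.rep) • β + (f R.rep * β Q.rep) • γ - (β Q.rep * γ R.rep) • f)
      (by simp [hβP, hγP, hfP]) (by simp [hγQ]; ring)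
    have hc0 : c = 0 := by
      have := LinearMap.congr_fun hc R.rep
      simp only [LinearMap.sub_apply, LinearMap.add_apply, LinearMap.smul_apply, smul_eq_mul,
        hβR] at this
      exact (mul_eq_zero.1 (show c * γ R.rep = 0 by linear_combination -this)).resolve_right hγR
    have := LinearMap.congr_fun hc u.rep
    simp only [LinearMap.sub_apply, LinearMap.add_apply, LinearMap.smul_apply, smul_eq_mul,
      hu.2.2, hc0] at this
    rw [he, div_eq_div_iff hγu (mul_ne_zero hfQ hγR)]
    linear_combination this
  set V := ((offLine S f).erase Q).erase R with hV
  have hset : ((S.erase P).erase Q).erase R = (onLine S f).erase P ∪ V := by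
    ext u
    have h1 : u = P → f u.rep = 0 := fun e => e ▸ hfP
    have h2 : u = Q → f u.rep ≠ 0 := fun e => e ▸ hfQ
    have h3 : u = R → f u.rep ≠ 0 := fun e => e ▸ hfR
    simp only [hV, Finset.mem_erase, Finset.mem_union, mem_onLine, mem_offLine]
    tauto
  have hdisj : Disjoint ((onLine S f).erase P) V := by
    rw [Finset.disjoint_left]
    intro u hu hu'
    simp only [hV, Finset.mem_erase, mem_onLine, mem_offLine] at hu hu'
    exact hu'.2.2.2 hu.2.2
  have hfV : ∏ u ∈ V, f u.rep ≠ 0 := Finset.prod_ne_zero_iff.2 fun u hu => by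
    simp only [hV, Finset.mem_erase, mem_offLine] at hu
    exact hu.2.2.2
  have hγV : ∏ u ∈ V, γ u.rep ≠ 0 := Finset.prod_ne_zero_iff.2 fun u hu => by
    simp only [hV, Finset.mem_erase, mem_offLine] at hu
    exact hγne u hu.2.2.1 hu.2.2.2 hu.2.1
  rw [← Finset.mul_prod_erase _ _ (show R ∈ (offLine S f).erase Q by simp [hR, hfR, hQR.symm]),
    ← hV, Finset.prod_div_distrib] at eγ
  rw [← Finset.mul_prod_erase _ _ (show Q ∈ (offLine S f).erase R by simp [hQ, hfQ, hQR]),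
    Finset.erase_right_comm, ← hV, Finset.prod_div_distrib] at eβ
  rw [hset, Finset.prod_union hdisj, Finset.prod_congr rfl hon, Finset.prod_const,
    Finset.card_erase_of_mem (by simp [hP, hfP]), hk, Finset.prod_div_distrib,
    show k + 2 - 1 = k + 1 from rfl, pow_succ]
  have hfn := h.off
  have hmain : e * ((∏ u ∈ V, β u.rep) / ∏ u ∈ V, γ u.rep) * (β n / γ n) = -1 := by
    have e' := eβ.trans eγ.symm
    field_simp at e'
    rw [he]
    field_simp
    linear_combination -e'
  linear_combination e ^ k * hmain

/-- In odd characteristic at most two secants of equal length share a nucleus. -/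
lemma IsNucleus.not_three {S : Finset (PGPoint F)} {f₁ f₂ f₃ : PGForm F} {n : Fin 3 → F}
    (h₁ : IsNucleus S f₁ n) (h₂ : IsNucleus S f₂ n) (h₃ : IsNucleus S f₃ n)
    (h₁₂ : ∀ c : F, f₂ ≠ c • f₁) (h₁₃ : ∀ c : F, f₃ ≠ c • f₁) (h₂₃ : ∀ c : F, f₃ ≠ c • f₂)
    {a : ℕ} (ha : 3 ≤ a) (hc₁ : (onLine S f₁).card = a) (hc₂ : (onLine S f₂).card = a)
    (hc₃ : (onLine S f₃).card = a) (htwo : (2 : F) ≠ 0) : False := by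
  classical
  obtain ⟨k, rfl⟩ : ∃ k, a = k + 2 := ⟨a - 2, by omega⟩
  have d₁₂ : ∀ u ∈ S, f₁ u.rep = 0 → f₂ u.rep ≠ 0 := fun u hu hfu =>
    h₁.disjoint h₁₂ (by omega) hu hfu
  have d₁₃ : ∀ u ∈ S, f₁ u.rep = 0 → f₃ u.rep ≠ 0 := fun u hu hfu =>
    h₁.disjoint h₁₃ (by omega) hu hfu
  have d₂₃ : ∀ u ∈ S, f₂ u.rep = 0 → f₃ u.rep ≠ 0 := fun u hu hfu =>
    h₂.disjoint h₂₃ (by omega) hu hfu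
  have key : ∀ P ∈ onLine S f₁, ∀ Q ∈ onLine S f₂, ∀ R ∈ onLine S f₃,
      (-(f₁ R.rep * f₃ Q.rep) / (f₁ Q.rep * f₂ R.rep) * (f₂ P.rep / f₃ P.rep)) ^ k = -1 := by
    intro P hP Q hQ R hR
    rw [mem_onLine] at hP hQ hR
    have P2 := d₁₂ P hP.1 hP.2
    have P3 := d₁₃ P hP.1 hP.2
    have Q1 : f₁ Q.rep ≠ 0 := fun e => d₁₂ Q hQ.1 e hQ.2
    have Q3 := d₂₃ Q hQ.1 hQ.2
    have R1 : f₁ R.rep ≠ 0 := fun e => d₁₃ R hR.1 e hR.2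
    have R2 : f₂ R.rep ≠ 0 := fun e => d₂₃ R hR.1 e hR.2
    have hPQ : P ≠ Q := fun e => Q1 (e ▸ hP.2)
    have hPR : P ≠ R := fun e => R1 (e ▸ hP.2)
    have hQR : Q ≠ R := fun e => R2 (e ▸ hQ.2)
    obtain ⟨α, hα, hαQ, hαR⟩ := exists_pgForm_through Q R
    obtain ⟨β, hβ, hβR, hβP⟩ := exists_pgForm_through R P
    obtain ⟨γ, hγ, hγP, hγQ⟩ := exists_pgForm_through P Q
    have e₁ := h₁.prod_triangle hc₁ hP.1 hQ.1 hR.1 hP.2 Q1 R1 hQR hβ hγ hβP hβR hγP hγQ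
    have e₂ := h₂.prod_triangle hc₂ hQ.1 hR.1 hP.1 hQ.2 R2 P2 hPR.symm hγ hα hγQ hγP hαQ hαR
    have e₃ := h₃.prod_triangle hc₃ hR.1 hP.1 hQ.1 hR.2 P3 Q3 hPQ hα hβ hαR hαQ hβR hβP
    obtain ⟨neβ, hβn, -⟩ := h₁.prod_eq hP.1 hP.2 hR.1 R1 hβ hβP hβR
    obtain ⟨neγ, hγn, -⟩ := h₁.prod_eq hP.1 hP.2 hQ.1 Q1 hγ hγP hγQ
    obtain ⟨neα, hαn, -⟩ := h₂.prod_eq hQ.1 hQ.2 hR.1 R2 hα hαQ hαR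
    obtain ⟨neα', -, -⟩ := h₃.prod_eq hR.1 hR.2 hQ.1 Q3 hα hαR hαQ
    obtain ⟨neβ', -, -⟩ := h₃.prod_eq hR.1 hR.2 hP.1 P3 hβ hβR hβP
    obtain ⟨neγ', -, -⟩ := h₂.prod_eq hQ.1 hQ.2 hP.1 P2 hγ hγQ hγP
    have hβQ := neβ Q hQ.1 Q1 hQR
    have hγR := neγ R hR.1 R1 hQR.symm
    have hαP := neα P hP.1 P2 hPR
    set W := ((S.erase P).erase Q).erase R with hW
    have hW₂ : ((S.erase Q).erase R).erase P = W := by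
      ext u
      simp only [hW, Finset.mem_erase]
      tauto
    have hW₃ : ((S.erase R).erase P).erase Q = W := by
      ext u
      simp only [hW, Finset.mem_erase]
      tauto
    rw [Finset.prod_div_distrib] at e₁
    rw [hW₂, Finset.prod_div_distrib] at e₂
    rw [hW₃, Finset.prod_div_distrib] at e₃
    have hmem : ∀ u ∈ W, u ≠ P ∧ u ≠ Q ∧ u ≠ R ∧ u ∈ S := fun u hu => by
      simp only [hW, Finset.mem_erase] at hu
      tauto
    have hWα : ∏ u ∈ W, α u.rep ≠ 0 := Finset.prod_ne_zero_iff.2 fun u hu => by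
      obtain ⟨-, uQ, uR, uS⟩ := hmem u hu
      by_cases h2 : f₂ u.rep = 0
      · exact neα' u uS (d₂₃ u uS h2) uQ
      · exact neα u uS h2 uR
    have hWβ : ∏ u ∈ W, β u.rep ≠ 0 := Finset.prod_ne_zero_iff.2 fun u hu => by
      obtain ⟨uP, -, uR, uS⟩ := hmem u hu
      by_cases h1 : f₁ u.rep = 0
      · exact neβ' u uS (d₁₃ u uS h1) uP
      · exact neβ u uS h1 uR
    have hWγ : ∏ u ∈ W, γ u.rep ≠ 0 := Finset.prod_ne_zero_iff.2 fun u hu => by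
      obtain ⟨uP, uQ, -, uS⟩ := hmem u hu
      by_cases h1 : f₁ u.rep = 0
      · exact neγ' u uS (d₁₂ u uS h1) uP
      · exact neγ u uS h1 uQ
    have hprod : -(-(f₁ R.rep * β Q.rep) / (f₁ Q.rep * γ R.rep)) ^ k *
        -(-(f₂ P.rep * γ R.rep) / (f₂ R.rep * α P.rep)) ^ k *
        -(-(f₃ Q.rep * α P.rep) / (f₃ P.rep * β Q.rep)) ^ k = 1 := by
      rw [← e₁, ← e₂, ← e₃]
      field_simp
    have hcomb : (-(f₁ R.rep * β Q.rep) / (f₁ Q.rep * γ R.rep)) *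
        (-(f₂ P.rep * γ R.rep) / (f₂ R.rep * α P.rep)) *
        (-(f₃ Q.rep * α P.rep) / (f₃ P.rep * β Q.rep)) =
        -(f₁ R.rep * f₃ Q.rep) / (f₁ Q.rep * f₂ R.rep) * (f₂ P.rep / f₃ P.rep) := by
      field_simp
    rw [← hcomb, mul_pow, mul_pow]
    linear_combination -hprod
  obtain ⟨Q, hQ⟩ := Finset.card_pos.1 (show 0 < (onLine S f₂).card by omega)
  obtain ⟨R, hR⟩ := Finset.card_pos.1 (show 0 < (onLine S f₃).card by omega)
  have hQ' := mem_onLine.1 hQ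
  have hR' := mem_onLine.1 hR
  have Q1 : f₁ Q.rep ≠ 0 := fun e => d₁₂ Q hQ'.1 e hQ'.2
  have Q3 := d₂₃ Q hQ'.1 hQ'.2
  have R1 : f₁ R.rep ≠ 0 := fun e => d₁₃ R hR'.1 e hR'.2
  have R2 : f₂ R.rep ≠ 0 := fun e => d₂₃ R hR'.1 e hR'.2
  set x : PGPoint F → F := fun P =>
    -(f₁ R.rep * f₃ Q.rep) / (f₁ Q.rep * f₂ R.rep) * (f₂ P.rep / f₃ P.rep) with hx
  have hcoef : -(f₁ R.rep * f₃ Q.rep) / (f₁ Q.rep * f₂ R.rep) ≠ 0 :=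
    div_ne_zero (neg_ne_zero.2 (mul_ne_zero R1 Q3)) (mul_ne_zero Q1 R2)
  by_cases hinj : Set.InjOn x (onLine S f₁)
  · have hle : ((onLine S f₁).image x).card ≤ k := by
      refine le_trans ?_ (Polynomial.card_nthRoots k (-1 : F))
      refine le_trans (Finset.card_le_card ?_) (Multiset.toFinset_card_le _)
      intro y hy
      obtain ⟨P, hP, rfl⟩ := Finset.mem_image.1 hy
      rw [Multiset.mem_toFinset, Polynomial.mem_nthRoots (by omega)]
      exact key P hP Q hQ R hR
    rw [Finset.card_image_of_injOn hinj, hc₁] at hle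
    omega
  · simp only [Set.InjOn, not_forall] at hinj
    obtain ⟨P, hP, P', hP', hxx, hPP⟩ := hinj
    rw [Finset.mem_coe] at hP hP'
    have hone := key P hP Q hQ R hR
    rw [mem_onLine] at hP hP'
    have P3 := d₁₃ P hP.1 hP.2
    have P3' := d₁₃ P' hP'.1 hP'.2
    have hratio : f₂ P.rep / f₃ P.rep = f₂ P'.rep / f₃ P'.rep := mul_left_cancel₀ hcoef hxx
    obtain ⟨c, hc⟩ := pgForm_eq_smul hPP h₁.ne_zero hP.2 hP'.2
      (g := f₂ - (f₂ P.rep / f₃ P.rep) • f₃) (by simp [P3]) (by rw [hratio]; simp [P3'])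
    have cQ := LinearMap.congr_fun hc Q.rep
    have cR := LinearMap.congr_fun hc R.rep
    simp only [LinearMap.sub_apply, LinearMap.smul_apply, smul_eq_mul, hQ'.2, hR'.2] at cQ cR
    have hval : -(f₁ R.rep * f₃ Q.rep) / (f₁ Q.rep * f₂ R.rep) * (f₂ P.rep / f₃ P.rep) = 1 := by
      rw [div_mul_eq_mul_div, div_eq_one_iff_eq (mul_ne_zero Q1 R2)]
      linear_combination f₁ R.rep * cQ - f₁ Q.rep * cR
    rw [hval, one_pow] at hone
    exact htwo (by linear_combination hone)

lemma isNucleus_rep {T : Finset (PGPoint F)} {L : PGLine F} {f : PGForm F} (hf : f ≠ 0)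
    (hfL : LinearMap.ker f = L.val) (hcard : (offLine T f).card + 1 = Fintype.card F)
    (htwo : 2 ≤ (onLine T f).card)
    (htan : ∀ P ∈ T, pgMem P L → ∃ t : PGLine F, pgMem P t ∧ nsec (T : Set (PGPoint F)) t = 1)
    {N : PGPoint F} (hN : ∀ P ∈ T, pgMem P L → ∀ t : PGLine F, pgMem P t →
      nsec (T : Set (PGPoint F)) t = 1 → pgMem N t) : IsNucleus T f N.rep := by
  have hoff : f N.rep ≠ 0 := by
    intro hfN
    obtain ⟨P, hP, hPN⟩ := Finset.exists_mem_ne (show 1 < (onLine T f).card by omega) N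
    obtain ⟨hPT, hfP⟩ := mem_onLine.1 hP
    have hPL := (pgMem_iff_form_eq_zero hfL P).2 hfP
    obtain ⟨t, hPt, ht⟩ := htan P hPT hPL
    have := pgLine_eq_of_mem hPN hPt (hN P hPT hPL t hPt ht) hPL
      ((pgMem_iff_form_eq_zero hfL N).2 hfN)
    rw [this, nsec_eq_card_onLine T hfL] at ht
    omega
  refine ⟨hf, hoff, fun P hP hfP => projectsOff_of_unique_tangent hcard hfP hf hoff ?_⟩
  intro g hg hgP hgN
  rcases tangent_or_exists_mem hP hg hgP with ⟨M, hgM, hPM, hM⟩ | hex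
  · have := hN P hP ((pgMem_iff_form_eq_zero hfL P).2 hfP) M hPM hM
    rw [pgMem_iff_form_eq_zero hgM] at this
    exact absurd this hgN
  · exact hex

/-- The tangents at the points of a secant are concurrent. -/
lemma exists_isNucleus {T : Finset (PGPoint F)} {L : PGLine F} {f : PGForm F} (hf : f ≠ 0)
    (hfL : LinearMap.ker f = L.val) (hF : 2 < Fintype.card F)
    (hcard : (offLine T f).card + 1 = Fintype.card F) (htwo : 2 ≤ (onLine T f).card)
    (htan : ∀ P ∈ T, pgMem P L → ∃! t : PGLine F, pgMem P t ∧ nsec (T : Set (PGPoint F)) t = 1) :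
    ∃ n, IsNucleus T f n := by
  refine IsNucleus.of_nucleus_of_point hF hcard hf fun P hP hfP => ?_
  obtain ⟨t, ⟨-, ht⟩, huniq⟩ := htan P hP ((pgMem_iff_form_eq_zero hfL P).2 hfP)
  obtain ⟨n, hnt, hnL⟩ : ∃ n ∈ t.val, n ∉ L.val := by
    by_contra! hle
    have : t = L := Subtype.ext (Submodule.eq_of_le_of_finrank_eq hle (by rw [t.2, L.2]))
    rw [this, nsec_eq_card_onLine T hfL] at ht
    omega
  have hfn : f n ≠ 0 := fun e => hnL (by rwa [← hfL])
  refine ⟨n, hfn, projectsOff_of_unique_tangent hcard hfP hf hfn ?_⟩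
  intro g hg hgP hgn
  rcases tangent_or_exists_mem hP hg hgP with ⟨M, hgM, hPM, hM⟩ | hex
  · rw [← huniq M ⟨hPM, hM⟩, ← hgM] at hnt
    exact absurd hnt hgn
  · exact hex

/-- If the characteristic divides the length of a secant with nucleus `N`, every unique tangent
passes through `N`. -/
lemma pgMem_nucleus_of_unique_tangent {T : Finset (PGPoint F)} {L : PGLine F} {f : PGForm F}
    (hfL : LinearMap.ker f = L.val) {N : PGPoint F} (h : IsNucleus T f N.rep)
    (hcard : (offLine T f).card + 1 = Fintype.card F)
    (htwo : 2 ≤ (onLine T f).card) (hzero : ((onLine T f).card : F) = 0)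
    (hN : ∀ P ∈ T, pgMem P L → ∀ t : PGLine F, pgMem P t →
      nsec (T : Set (PGPoint F)) t = 1 → pgMem N t)
    {R : PGPoint F} (hR : R ∈ T) {r : PGLine F} (hRr : pgMem R r)
    (hr : nsec (T : Set (PGPoint F)) r = 1)
    (huniq : ∀ t : PGLine F, pgMem R t ∧ nsec (T : Set (PGPoint F)) t = 1 → t = r) :
    pgMem N r := by
  by_cases hfR : f R.rep = 0
  · exact hN R hR ((pgMem_iff_form_eq_zero hfL R).2 hfR) r hRr hr
  obtain ⟨t, ht, htr⟩ := exists_pgForm_ker_eq r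
  rw [pgMem_iff_form_eq_zero htr]
  refine h.tangent_eq_zero hcard htwo hzero hR hfR ((pgMem_iff_form_eq_zero htr R).1 hRr) ?_ ?_
  · intro u hu htu
    exact eq_of_mem_tangent hr hu hR ((pgMem_iff_form_eq_zero htr u).2 htu) hRr
  · intro g hgR hgt
    have hg : g ≠ 0 := fun e => hgt 0 (by simp [e])
    rcases tangent_or_exists_mem hR hg hgR with ⟨M, hgM, hRM, hM⟩ | hex
    · have hMr := huniq M ⟨hRM, hM⟩
      obtain ⟨c, hc⟩ : ∃ c : F, g = c • t := by
        by_contra! hcon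
        have hker : LinearMap.ker t = LinearMap.ker g := by rw [htr, hgM, hMr]
        obtain ⟨v, hv⟩ : ∃ v, t v ≠ 0 := by
          by_contra! hz
          exact ht (LinearMap.ext hz)
        refine hcon (g v / t v) (LinearMap.ext fun w => ?_)
        have hw : w - (t w / t v) • v ∈ LinearMap.ker t := by simp [hv]
        rw [hker, LinearMap.mem_ker, map_sub, map_smul, smul_eq_mul, sub_eq_zero] at hw
        rw [hw, LinearMap.smul_apply, smul_eq_mul]
        ring
      exact absurd hc (hgt c)
    · exact hex

/-- The common point of the tangents at the points of a secant is unique. -/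
lemma nucleus_unique {T : Finset (PGPoint F)} {L : PGLine F} {f : PGForm F}
    (hfL : LinearMap.ker f = L.val) (htwo : 2 ≤ (onLine T f).card)
    (htan : ∀ P ∈ T, pgMem P L → ∃! t : PGLine F, pgMem P t ∧ nsec (T : Set (PGPoint F)) t = 1)
    {M N : PGPoint F}
    (hM : ∀ P ∈ T, pgMem P L → ∀ t : PGLine F, pgMem P t →
      nsec (T : Set (PGPoint F)) t = 1 → pgMem M t)
    (hN : ∀ P ∈ T, pgMem P L → ∀ t : PGLine F, pgMem P t →
      nsec (T : Set (PGPoint F)) t = 1 → pgMem N t) : M = N := by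
  by_contra hne
  obtain ⟨P, hP, Q, hQ, hPQ⟩ := Finset.one_lt_card.1 (show 1 < (onLine T f).card by omega)
  rw [mem_onLine, ← pgMem_iff_form_eq_zero hfL] at hP hQ
  obtain ⟨t, ⟨hPt, ht⟩, -⟩ := htan P hP.1 hP.2
  obtain ⟨s, ⟨hQs, hs⟩, -⟩ := htan Q hQ.1 hQ.2
  have hts := pgLine_eq_of_mem hne (hM P hP.1 hP.2 t hPt ht) (hN P hP.1 hP.2 t hPt ht)
    (hM Q hQ.1 hQ.2 s hQs hs) (hN Q hQ.1 hQ.2 s hQs hs)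
  exact hPQ (eq_of_mem_tangent ht hP.1 hQ.1 hPt (hts ▸ hQs))

end Nucleus

/-- Let `S` be a set of `q − 1 + a` points in `PG(2,q)`, `q = p^h`, `a ≥ 3`, and let `ℓ₁, ℓ₂` be
(distinct) `a`-secants of `S` such that at each point of `S ∩ ℓᵢ` there is a unique tangent
to `S`, with nuclei `N₁, N₂`.  Then:
(1) either `N₁ ∈ ℓ₂` and `N₂ ∈ ℓ₁`, or
(2) `N₁ = N₂`, `p ∣ a`, and every unique tangent at a point of `S` passes through `N₁ = N₂`;
(3) if `ℓ₃` is a further `a`-secant of `S` with a unique tangent at each point of `S ∩ ℓ₃`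
    and `q` or `a` is odd, then `ℓ₃` is the line `N₁N₂` (in particular `N₁ ≠ N₂`, so `ℓ₃` is
    uniquely determined). -/
theorem stmt_16 {F : Type*} [Field F] [Fintype F] (p h q : ℕ) (hp : p.Prime) (hq : q = p ^ h)
    (hcard : Fintype.card F = q)
    (a : ℕ) (ha : 3 ≤ a)
    (S : Set (PGPoint F)) (hsize : S.ncard = q - 1 + a)
    (ℓ₁ ℓ₂ : PGLine F) (hne : ℓ₁ ≠ ℓ₂)
    (h₁ : nsec S ℓ₁ = a) (h₂ : nsec S ℓ₂ = a)
    (htan₁ : ∀ P ∈ S, pgMem P ℓ₁ → ∃! t : PGLine F, pgMem P t ∧ nsec S t = 1)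
    (htan₂ : ∀ P ∈ S, pgMem P ℓ₂ → ∃! t : PGLine F, pgMem P t ∧ nsec S t = 1)
    (N₁ N₂ : PGPoint F)
    (hN₁ : ∀ P ∈ S, pgMem P ℓ₁ → ∀ t : PGLine F, pgMem P t → nsec S t = 1 → pgMem N₁ t)
    (hN₂ : ∀ P ∈ S, pgMem P ℓ₂ → ∀ t : PGLine F, pgMem P t → nsec S t = 1 → pgMem N₂ t) :
    ((pgMem N₁ ℓ₂ ∧ pgMem N₂ ℓ₁) ∨
      (N₁ = N₂ ∧ p ∣ a ∧
        ∀ R ∈ S, ∀ r : PGLine F,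
          (pgMem R r ∧ nsec S r = 1 ∧ ∀ t : PGLine F, pgMem R t ∧ nsec S t = 1 → t = r) →
          pgMem N₁ r)) ∧
    (∀ ℓ₃ : PGLine F, ℓ₃ ≠ ℓ₁ → ℓ₃ ≠ ℓ₂ → nsec S ℓ₃ = a →
      (∀ P ∈ S, pgMem P ℓ₃ → ∃! t : PGLine F, pgMem P t ∧ nsec S t = 1) →
      (Odd q ∨ Odd a) →
      N₁ ≠ N₂ ∧ pgMem N₁ ℓ₃ ∧ pgMem N₂ ℓ₃) := by
  classical
  obtain ⟨T, rfl⟩ := S.toFinite.exists_finset_coe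
  simp only [Finset.mem_coe] at *
  have : Fact p.Prime := ⟨hp⟩
  have : CharP F p := charP_of_card_eq_prime_pow (hcard.trans hq)
  have hq1 : 1 < Fintype.card F := Fintype.one_lt_card
  rw [Set.ncard_coe_finset] at hsize
  have hoff : ∀ f : PGForm F, (onLine T f).card = a →
      (offLine T f).card + 1 = Fintype.card F := by
    intro f hf
    have := card_onLine_add_card_offLine T f
    omega
  obtain ⟨f₁, hf₁, hk₁⟩ := exists_pgForm_ker_eq ℓ₁
  obtain ⟨f₂, hf₂, hk₂⟩ := exists_pgForm_ker_eq ℓ₂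
  rw [nsec_eq_card_onLine T hk₁] at h₁
  rw [nsec_eq_card_onLine T hk₂] at h₂
  have n₁ : IsNucleus T f₁ N₁.rep := isNucleus_rep hf₁ hk₁ (hoff f₁ h₁) (by omega)
    (fun P hP hPL => (htan₁ P hP hPL).exists) hN₁
  have n₂ : IsNucleus T f₂ N₂.rep := isNucleus_rep hf₂ hk₂ (hoff f₂ h₂) (by omega)
    (fun P hP hPL => (htan₂ P hP hPL).exists) hN₂
  have hne₁₂ := pgForm_ne_smul_of_pgLine_ne hne hf₂ hk₁ hk₂
  have htangents : (a : F) = 0 → ∀ R ∈ T, ∀ r : PGLine F, (pgMem R r ∧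
      nsec (T : Set (PGPoint F)) r = 1 ∧
      ∀ t : PGLine F, pgMem R t ∧ nsec (T : Set (PGPoint F)) t = 1 → t = r) → pgMem N₁ r :=
    fun ha0 R hR r hr => pgMem_nucleus_of_unique_tangent hk₁ n₁ (hoff f₁ h₁) (by omega)
      (by rw [h₁, ha0]) hN₁ hR hr.1 hr.2.1 hr.2.2
  have hnuc : (a : F) = 0 → ∀ L : PGLine F,
      (∀ P ∈ T, pgMem P L → ∃! t : PGLine F, pgMem P t ∧ nsec (T : Set (PGPoint F)) t = 1) →
      ∀ P ∈ T, pgMem P L → ∀ t : PGLine F, pgMem P t →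
        nsec (T : Set (PGPoint F)) t = 1 → pgMem N₁ t :=
    fun ha0 L hL P hP hPL t hPt ht => htangents ha0 P hP t
      ⟨hPt, ht, fun s hs => (hL P hP hPL).unique hs ⟨hPt, ht⟩⟩
  have heq : (a : F) = 0 → N₁ = N₂ := fun ha0 =>
    nucleus_unique hk₂ (by omega) htan₂ (hnuc ha0 ℓ₂ htan₂) hN₂
  have hpair := n₁.pair n₂ hne₁₂ ha h₁ h₂
  refine ⟨?_, ?_⟩
  · rcases hpair with ⟨e₁, e₂⟩ | ⟨ha0, -⟩
    · exact Or.inl ⟨(pgMem_iff_form_eq_zero hk₂ N₁).2 e₁, (pgMem_iff_form_eq_zero hk₁ N₂).2 e₂⟩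
    · exact Or.inr ⟨heq ha0, (CharP.cast_eq_zero_iff F p a).1 ha0, htangents ha0⟩
  intro ℓ₃ h31 h32 h₃ htan₃ hodd
  obtain ⟨f₃, hf₃, hk₃⟩ := exists_pgForm_ker_eq ℓ₃
  rw [nsec_eq_card_onLine T hk₃] at h₃
  have hne₁₃ := pgForm_ne_smul_of_pgLine_ne h31.symm hf₃ hk₁ hk₃
  have hne₂₃ := pgForm_ne_smul_of_pgLine_ne h32.symm hf₃ hk₂ hk₃
  have ha0 : (a : F) ≠ 0 := by
    intro ha0
    have hpa := (CharP.cast_eq_zero_iff F p a).1 ha0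
    have hp2 : p ≠ 2 := by
      rintro rfl
      rcases hodd with ho | ho
      · have hh : h ≠ 0 := by
          rintro rfl
          rw [pow_zero] at hq
          omega
        rw [hq, Nat.odd_pow_iff hh] at ho
        exact absurd ho (by decide)
      · exact (Nat.not_even_iff_odd.2 ho) (even_iff_two_dvd.2 hpa)
    have htwo : (2 : F) ≠ 0 := Ring.two_ne_zero (by rwa [ringChar.eq F p])
    have n₃ : IsNucleus T f₃ N₁.rep := isNucleus_rep hf₃ hk₃ (hoff f₃ h₃) (by omega)
      (fun P hP hPL => (htan₃ P hP hPL).exists) (hnuc ha0 ℓ₃ htan₃)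
    exact n₁.not_three (heq ha0 ▸ n₂) n₃ hne₁₂ hne₁₃ hne₂₃ ha h₁ h₂ h₃ htwo
  have hF : 2 < Fintype.card F := by
    have hsub : onLine T f₂ ⊆ offLine T f₁ := by
      intro u hu
      rw [mem_onLine] at hu
      exact mem_offLine.2 ⟨hu.1, fun e => n₁.disjoint hne₁₂ (by omega) hu.1 e hu.2⟩
    have := Finset.card_le_card hsub
    have := hoff f₁ h₁
    omega
  obtain ⟨n, n₃⟩ := exists_isNucleus hf₃ hk₃ hF (hoff f₃ h₃) (by omega) htan₃
  have e₁₂ := hpair.resolve_right fun e => ha0 e.1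
  have e₁₃ := (n₁.pair n₃ hne₁₃ ha h₁ h₃).resolve_right fun e => ha0 e.1
  have e₂₃ := (n₂.pair n₃ hne₂₃ ha h₂ h₃).resolve_right fun e => ha0 e.1
  refine ⟨?_, (pgMem_iff_form_eq_zero hk₃ N₁).2 e₁₃.1, (pgMem_iff_form_eq_zero hk₃ N₂).2 e₂₃.1⟩
  rintro rfl
  exact n₁.off e₁₂.2
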